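/- In the regime switching model, suppose all distributions P_a equal a common distribution P = (p_k)_{k≥1} with counting function ν. Then for any n ≥ 1, 0 ≤ r ≤ n−1, and ε ∈ [0,1]: P{𝓛_n = r} ≤ Σ_{m=r}^n C_{r,m}(ε) P{L_n = m}, where C_{r,r} = Σ_{k≥1} p_k^{1+r}, and for r+1 ≤ m ≤ n, C_{r,m}(ε) = c(r)ν(ε)/m + 2^{1+r} C(m,r) ∫_0^ε u^r ν(u/2) (1 − u/2)^{m−r} du, with c(0) = e^{−1} and c(r) = e(1+r)/√π for r ≥ 1. -/

import Mathlib

open MeasureTheory ENNReal Finset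

/-- The constant `c(r)`: `c(0) = e⁻¹` and `c(r) = e(1+r)/√π` for `r ≥ 1`. -/
noncomputable def cDGP (r : ℕ) : ℝ≥0∞ :=
  if r = 0 then ENNReal.ofReal (Real.exp (-1))
  else ENNReal.ofReal (Real.exp 1 * (1 + r) / Real.sqrt Real.pi)

open scoped Classical in
/-- The counting function `ν(ε) = Σ_k 1{p_k ≥ ε}` of a distribution `q` on `ℕ`. -/
noncomputable def nuCount1 (q : ℕ → ℝ≥0∞) (ε : ℝ) : ℝ≥0∞ :=
  ∑' k, if ENNReal.ofReal ε ≤ q k then 1 else 0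


lemma tsum_snoc {B : Type*} (n : ℕ) (f : (Fin (n + 1) → B) → ℝ≥0∞) :
    ∑' x, f x = ∑' (b : B), ∑' (y : Fin n → B), f (Fin.snoc (α := fun _ => B) y b) := by
  rw [← (Fin.snocEquiv (fun _ : Fin (n + 1) => B)).tsum_eq f, ENNReal.tsum_prod']
  rfl

lemma tsum_pi_prod {B : Type*} (n : ℕ) (f : Fin n → B → ℝ≥0∞) :
    ∑' (x : Fin n → B), ∏ i, f i (x i) = ∏ i, ∑' b, f i b := by
  induction n with
  | zero => simp
  | succ n ih =>
    rw [tsum_snoc, Fin.prod_univ_castSucc, ← ih]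
    simp only [Fin.prod_univ_castSucc, Fin.snoc_castSucc, Fin.snoc_last]
    simp_rw [ENNReal.tsum_mul_right, ENNReal.tsum_mul_left]

lemma tsum_ne (q : ℕ → ℝ≥0∞) (hq : ∑' k, q k = 1) (c : ℕ) :
    (∑' k, if k ≠ c then q k else 0) = 1 - q c := by
  have h := ENNReal.tsum_eq_add_tsum_ite (f := q) c
  have hc : q c ≤ 1 := hq ▸ ENNReal.le_tsum c
  have hc' : q c ≠ ∞ := ne_top_of_le_ne_top ENNReal.one_ne_top hc
  rw [hq] at h
  rw [h, ENNReal.add_sub_cancel_left hc']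
  congr 1; ext k; split_ifs <;> simp_all

lemma tsum_count (q : ℕ → ℝ≥0∞) (hq : ∑' k, q k = 1) (c n r : ℕ) (J : Finset (Fin n)) :
    (∑' (x : Fin n → ℕ), if (J.filter (fun i => x i = c)).card = r then ∏ i, q (x i) else 0)
      = (J.card.choose r : ℝ≥0∞) * (q c ^ r * (1 - q c) ^ (J.card - r)) := by
  classical
  let f : Finset (Fin n) → Fin n → ℕ → ℝ≥0∞ := fun S i k =>
    if i ∈ J then (if i ∈ S then (if k = c then q k else 0) else (if k ≠ c then q k else 0))
    else q k
  have key : ∀ x : Fin n → ℕ,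
      (if (J.filter (fun i => x i = c)).card = r then ∏ i, q (x i) else 0)
        = ∑ S ∈ J.powersetCard r, ∏ i, f S i (x i) := by
    intro x
    have h1 : ∀ S ∈ J.powersetCard r, ∏ i, f S i (x i) =
        if S = J.filter (fun i => x i = c) then ∏ i, q (x i) else 0 := by
      intro S hS
      have hSJ := (Finset.mem_powersetCard.1 hS).1
      split_ifs with h
      · apply Finset.prod_congr rfl
        intro i _
        simp only [f, h, Finset.mem_filter]
        split_ifs <;> simp_all
      · have : ∃ i ∈ J, ¬ (i ∈ S ↔ x i = c) := by
          by_contra! hh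
          apply h
          ext i
          simp only [Finset.mem_filter]
          constructor
          · intro hi; exact ⟨hSJ hi, (hh i (hSJ hi)).1 hi⟩
          · rintro ⟨hi, h2⟩; exact (hh i hi).2 h2
        obtain ⟨i, hiJ, hi⟩ := this
        apply Finset.prod_eq_zero (Finset.mem_univ i)
        simp only [f, hiJ, if_true]
        split_ifs <;> simp_all
    rw [Finset.sum_congr rfl h1, Finset.sum_ite_eq']
    simp only [Finset.mem_powersetCard, Finset.filter_subset, true_and]
  have hf : ∀ S ∈ J.powersetCard r, ∏ i, ∑' k, f S i k = q c ^ r * (1 - q c) ^ (J.card - r) := by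
    intro S hS
    obtain ⟨hSJ, hc⟩ := Finset.mem_powersetCard.1 hS
    have : ∀ i, ∑' k, f S i k =
        if i ∈ J then (if i ∈ S then q c else 1 - q c) else 1 := by
      intro i
      simp only [f]
      split_ifs
      · exact tsum_ite_eq c q
      · exact tsum_ne q hq c
      · exact hq
    simp_rw [this]
    rw [Finset.prod_ite_mem, Finset.univ_inter, Finset.prod_ite, Finset.prod_const,
      Finset.prod_const, Finset.filter_mem_eq_inter, Finset.inter_eq_right.2 hSJ, hc,
      Finset.filter_notMem_eq_sdiff, Finset.card_sdiff_of_subset hSJ, hc]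
  simp_rw [key]
  rw [Summable.tsum_finsetSum (fun _ _ => ENNReal.summable)]
  simp_rw [tsum_pi_prod]
  rw [Finset.sum_congr rfl hf, Finset.sum_const, Finset.card_powersetCard, nsmul_eq_mul]

lemma lint_pow (r : ℕ) (t : ℝ) (ht : 0 ≤ t) :
    ∫⁻ u in Set.Ioc (0 : ℝ) t, ENNReal.ofReal u ^ r = ENNReal.ofReal (t ^ (r + 1) / (r + 1)) := by
  have h1 : ∫⁻ u in Set.Ioc (0 : ℝ) t, ENNReal.ofReal u ^ r =
      ∫⁻ u in Set.Ioc (0 : ℝ) t, ENNReal.ofReal (u ^ r) := by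
    apply setLIntegral_congr_fun measurableSet_Ioc
    intro u hu
    exact (ENNReal.ofReal_pow hu.1.le r).symm
  rw [h1, ← ofReal_integral_eq_lintegral_ofReal, ← intervalIntegral.integral_of_le ht, integral_pow]
  · simp
  · exact ((continuous_pow r).intervalIntegrable 0 t).1
  · filter_upwards [ae_restrict_mem measurableSet_Ioc] with u hu
    exact pow_nonneg hu.1.le r

lemma big_bound (m r : ℕ) (hm : r < m) (t : ℝ) (h0 : 0 ≤ t) (h1 : t ≤ 1) :
    (m.choose r : ℝ) * (t ^ (r + 1) * (1 - t) ^ (m - r)) ≤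
      (if r = 0 then Real.exp (-1) else Real.exp 1 * (1 + r) / Real.sqrt Real.pi) / m := by
  have hm0 : (0 : ℝ) < m := by exact_mod_cast (by omega : 0 < m)
  split_ifs with hr
  · subst hr
    rw [le_div_iff₀ hm0]
    simp only [Nat.choose_zero_right, Nat.cast_one, zero_add, pow_one, Nat.sub_zero, one_mul]
    have h2 : (1 - t) ^ m ≤ Real.exp (-(m * t)) := by
      have : 1 - t ≤ Real.exp (-t) := by linarith [Real.add_one_le_exp (-t)]
      calc (1 - t) ^ m ≤ Real.exp (-t) ^ m := pow_le_pow_left₀ (by linarith) this m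
        _ = _ := by rw [← Real.exp_nat_mul]; congr 1; ring
    have h3 : m * t ≤ Real.exp (m * t - 1) := by linarith [Real.add_one_le_exp (m * t - 1)]
    calc t * (1 - t) ^ m * m = (m * t) * (1 - t) ^ m := by ring
      _ ≤ Real.exp (m * t - 1) * Real.exp (-(m * t)) := by
        apply mul_le_mul h3 h2 (pow_nonneg (by linarith) _) (Real.exp_pos _).le
      _ = Real.exp (-1) := by rw [← Real.exp_add]; congr 1; ring
  · have hb : ((m + 1).choose (r + 1) : ℝ) * (t ^ (r + 1) * (1 - t) ^ (m - r)) ≤ 1 := by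
      have h := add_pow t (1 - t) (m + 1)
      rw [add_sub_cancel, one_pow] at h
      have h4 := Finset.single_le_sum (s := Finset.range (m + 1 + 1))
        (f := fun k => t ^ k * (1 - t) ^ (m + 1 - k) * ((m + 1).choose k : ℝ))
        (fun i _ => mul_nonneg (mul_nonneg (pow_nonneg h0 _) (pow_nonneg (by linarith) _))
          (Nat.cast_nonneg _)) (Finset.mem_range.2 (by omega : r + 1 < m + 1 + 1))
      rw [← h] at h4
      simp only [Nat.add_sub_add_right] at h4
      linarith
    have hc : ((m : ℝ) + 1) * (m.choose r : ℝ) = ((m + 1).choose (r + 1) : ℝ) * (r + 1) := by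
      exact_mod_cast Nat.add_one_mul_choose_eq m r
    have hpi : Real.sqrt Real.pi ≤ Real.exp 1 := by
      have : Real.sqrt Real.pi ≤ 2 := by
        rw [Real.sqrt_le_left (by norm_num)]; linarith [Real.pi_le_four]
      linarith [Real.add_one_le_exp 1]
    have hsp : 0 < Real.sqrt Real.pi := Real.sqrt_pos.2 Real.pi_pos
    set X := t ^ (r + 1) * (1 - t) ^ (m - r) with hX
    have hX0 : 0 ≤ X := mul_nonneg (pow_nonneg h0 _) (pow_nonneg (by linarith) _)
    have h5 : (m : ℝ) * ((m.choose r : ℝ) * X) ≤ r + 1 := by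
      have : ((m : ℝ) + 1) * ((m.choose r : ℝ) * X) ≤ r + 1 := by
        rw [← mul_assoc, hc]
        have : (0 : ℝ) ≤ r := Nat.cast_nonneg r
        nlinarith
      have : 0 ≤ (m.choose r : ℝ) * X := by positivity
      linarith
    rw [le_div_iff₀ hm0, le_div_iff₀ hsp]
    have : (0 : ℝ) ≤ r := Nat.cast_nonneg r
    calc (m.choose r : ℝ) * X * m * Real.sqrt Real.pi ≤ (r + 1) * Real.exp 1 := by
          apply mul_le_mul _ hpi hsp.le (by positivity)
          linarith
      _ = _ := by ring

open scoped Classical in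
lemma term_bound (x : ℝ≥0∞) (hx : x ≤ 1) (m r : ℕ) (hm : r < m) (ε : ℝ) (hε : ε ≤ 1) :
    (m.choose r : ℝ≥0∞) * (x ^ (r + 1) * (1 - x) ^ (m - r)) ≤
      cDGP r * (if ENNReal.ofReal ε ≤ x then 1 else 0) / (m : ℝ≥0∞) +
        2 ^ (r + 1) * (m.choose r : ℝ≥0∞) * ∫⁻ u in Set.Ioc (0 : ℝ) ε,
          ENNReal.ofReal u ^ r * (if ENNReal.ofReal (u / 2) ≤ x then 1 else 0) *
            ENNReal.ofReal (1 - u / 2) ^ (m - r) := by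
  have hxt : x ≠ ∞ := ne_top_of_le_ne_top ENNReal.one_ne_top hx
  obtain ⟨t, ht0, rfl⟩ : ∃ t : ℝ, 0 ≤ t ∧ x = ENNReal.ofReal t :=
    ⟨x.toReal, ENNReal.toReal_nonneg, (ENNReal.ofReal_toReal hxt).symm⟩
  have ht1 : t ≤ 1 := by simpa using hx
  have hsub : 1 - ENNReal.ofReal t = ENNReal.ofReal (1 - t) := by
    rw [ENNReal.ofReal_sub _ ht0, ENNReal.ofReal_one]
  have hm0 : (0 : ℝ) < m := by exact_mod_cast (by omega : 0 < m)
  rw [hsub]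
  by_cases h : ENNReal.ofReal ε ≤ ENNReal.ofReal t
  · rw [if_pos h, mul_one]
    refine le_trans ?_ le_self_add
    have hb := ENNReal.ofReal_le_ofReal (big_bound m r hm t ht0 ht1)
    have hcd : cDGP r = ENNReal.ofReal
        (if r = 0 then Real.exp (-1) else Real.exp 1 * (1 + r) / Real.sqrt Real.pi) := by
      unfold cDGP; split_ifs <;> rfl
    rw [hcd]
    rw [ENNReal.ofReal_div_of_pos hm0, ENNReal.ofReal_natCast,
      ENNReal.ofReal_mul (Nat.cast_nonneg _), ENNReal.ofReal_natCast,
      ENNReal.ofReal_mul (pow_nonneg ht0 _), ENNReal.ofReal_pow ht0,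
      ENNReal.ofReal_pow (by linarith)] at hb
    exact hb
  · have hte : t < ε := by
      by_contra! h'
      exact h (ENNReal.ofReal_le_ofReal h')
    refine le_trans ?_ le_add_self
    have h1 : ENNReal.ofReal (1 - t) ^ (m - r) * ENNReal.ofReal (t ^ (r + 1) / (r + 1)) ≤
        ∫⁻ u in Set.Ioc (0 : ℝ) ε,
          ENNReal.ofReal u ^ r * (if ENNReal.ofReal (u / 2) ≤ ENNReal.ofReal t then 1 else 0) *
            ENNReal.ofReal (1 - u / 2) ^ (m - r) := by
      rw [← lint_pow r t ht0, ← lintegral_const_mul' _ _ (by finiteness)]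
      refine le_trans ?_ (lintegral_mono_set (Set.Ioc_subset_Ioc_right hte.le))
      apply setLIntegral_mono' measurableSet_Ioc
      intro u hu
      have : ENNReal.ofReal (u / 2) ≤ ENNReal.ofReal t :=
        ENNReal.ofReal_le_ofReal (by linarith [hu.1, hu.2])
      rw [if_pos this, mul_one, mul_comm]
      gcongr
      linarith [hu.1, hu.2]
    have h2 : ENNReal.ofReal t ^ (r + 1) ≤
        2 ^ (r + 1) * ENNReal.ofReal (t ^ (r + 1) / (r + 1)) := by
      have e : (2 : ℝ≥0∞) ^ (r + 1) = ENNReal.ofReal (2 ^ (r + 1)) := by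
        rw [ENNReal.ofReal_pow (by norm_num)]; norm_num
      rw [e, ← ENNReal.ofReal_mul (by positivity), ← ENNReal.ofReal_pow ht0]
      apply ENNReal.ofReal_le_ofReal
      have h3 : ((r : ℝ) + 1) ≤ 2 ^ (r + 1) := by
        exact_mod_cast (Nat.lt_two_pow_self (n := r + 1)).le
      have hp : 0 ≤ t ^ (r + 1) := by positivity
      rw [← mul_div_assoc, le_div_iff₀ (by positivity)]
      nlinarith
    calc (m.choose r : ℝ≥0∞) * (ENNReal.ofReal t ^ (r + 1) * ENNReal.ofReal (1 - t) ^ (m - r))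
        ≤ (m.choose r : ℝ≥0∞) * ((2 ^ (r + 1) * ENNReal.ofReal (t ^ (r + 1) / (r + 1))) *
            ENNReal.ofReal (1 - t) ^ (m - r)) := by gcongr
      _ = 2 ^ (r + 1) * (m.choose r : ℝ≥0∞) *
          (ENNReal.ofReal (1 - t) ^ (m - r) * ENNReal.ofReal (t ^ (r + 1) / (r + 1))) := by ring
      _ ≤ _ := by gcongr

lemma sum_bound (q : ℕ → ℝ≥0∞) (hq : ∑' k, q k = 1) (m r : ℕ) (hm : r < m) (ε : ℝ)
    (hε : ε ≤ 1) :
    ∑' c, (m.choose r : ℝ≥0∞) * (q c ^ (r + 1) * (1 - q c) ^ (m - r)) ≤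
      cDGP r * nuCount1 q ε / (m : ℝ≥0∞) +
           2 ^ (r + 1) * (m.choose r : ℝ≥0∞) *
             ∫⁻ u in Set.Ioc (0 : ℝ) ε,
               ENNReal.ofReal u ^ r * nuCount1 q (u / 2) *
                 ENNReal.ofReal (1 - u / 2) ^ (m - r) := by
  classical
  refine (ENNReal.tsum_le_tsum fun c =>
    term_bound (q c) (hq ▸ ENNReal.le_tsum c) m r hm ε hε).trans ?_
  rw [ENNReal.tsum_add]
  apply le_of_eq
  congr 1
  · simp only [div_eq_mul_inv]
    rw [ENNReal.tsum_mul_right, ENNReal.tsum_mul_left]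
    rfl
  · rw [ENNReal.tsum_mul_left]
    congr 1
    rw [← lintegral_tsum]
    · congr 1; ext u
      rw [ENNReal.tsum_mul_right, ENNReal.tsum_mul_left]
      rfl
    · intro c
      apply Measurable.aemeasurable
      apply Measurable.mul
      · apply Measurable.mul (by fun_prop)
        apply Measurable.ite _ measurable_const measurable_const
        exact measurableSet_le (by fun_prop) measurable_const
      · fun_prop

lemma meas_eq {Ω X : Type*} [MeasurableSpace Ω] (P : Measure Ω) [IsProbabilityMeasure P]
    [Countable X] (τ : Ω → X) (w : X → ℝ≥0∞) (hw : ∀ x, P (τ ⁻¹' {x}) = w x)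
    (h1 : ∑' x, w x = 1) (S : Set X) : P (τ ⁻¹' S) = ∑' x, S.indicator w x := by
  have hle : ∀ S : Set X, P (τ ⁻¹' S) ≤ ∑' x, S.indicator w x := by
    intro S
    have : τ ⁻¹' S = ⋃ x : S, τ ⁻¹' {(x : X)} := by ext ω; simp
    rw [this]
    refine (measure_iUnion_le _).trans ?_
    rw [← _root_.tsum_subtype]
    simp [hw]
  apply le_antisymm (hle S)
  have hc : ∑' x, S.indicator w x + ∑' x, Sᶜ.indicator w x = 1 := by
    rw [← ENNReal.tsum_add, ← h1]
    congr 1; ext x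
    exact congrFun (Set.indicator_self_add_compl S w) x
  have h2 : 1 ≤ P (τ ⁻¹' S) + P (τ ⁻¹' Sᶜ) := by
    rw [← measure_univ (μ := P)]
    refine le_trans (measure_mono ?_) (measure_union_le _ _)
    intro ω _
    by_cases h : τ ω ∈ S
    · exact Or.inl h
    · exact Or.inr h
  have hfin : ∑' x, Sᶜ.indicator w x ≠ ∞ :=
    ne_top_of_le_ne_top ENNReal.one_ne_top (hc ▸ le_add_self)
  rw [← hc] at h2
  exact (ENNReal.add_le_add_iff_right hfin).1 (h2.trans (by gcongr; exact hle _))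

/-- Extension of a finite tuple to a sequence. -/
def extF {B : Type*} (b0 : B) {n : ℕ} (x : Fin n → B) (i : ℕ) : B :=
  if h : i < n then x ⟨i, h⟩ else b0

lemma tsum_R {A : Type*} (a0 : A) (R : ℕ → (ℕ → A) → A → ℝ≥0∞)
    (hRdep : ∀ (n : ℕ) (a a' : ℕ → A), (∀ i < n, a i = a' i) → R n a = R n a')
    (hRsum : ∀ (n : ℕ) (a : ℕ → A), ∑' b, R n a b = 1) (n : ℕ) :
    ∑' (a : Fin n → A), ∏ i ∈ Finset.range n, R i (extF a0 a) (extF a0 a i) = 1 := by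
  induction n with
  | zero => simp
  | succ n ih =>
    rw [tsum_snoc, ENNReal.tsum_comm]
    have hlt : ∀ (y : Fin n → A) (b : A), ∀ i < n,
        extF a0 (Fin.snoc (α := fun _ => A) y b) i = extF a0 y i := by
      intro y b i hi
      have h' : i < n + 1 := by omega
      simp only [extF, hi, h', dif_pos]
      exact Fin.snoc_castSucc (α := fun _ => A) b y ⟨i, hi⟩
    have hlast : ∀ (y : Fin n → A) (b : A),
        extF a0 (Fin.snoc (α := fun _ => A) y b) n = b := by
      intro y b
      simp only [extF, Nat.lt_succ_self, dif_pos]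
      exact Fin.snoc_last (α := fun _ => A) b y
    rw [← ih]
    congr 1; ext y
    simp_rw [Finset.prod_range_succ]
    have : ∀ b, (∏ i ∈ Finset.range n, R i (extF a0 (Fin.snoc (α := fun _ => A) y b))
        (extF a0 (Fin.snoc (α := fun _ => A) y b) i)) *
          R n (extF a0 (Fin.snoc (α := fun _ => A) y b))
            (extF a0 (Fin.snoc (α := fun _ => A) y b) n) =
        (∏ i ∈ Finset.range n, R i (extF a0 y) (extF a0 y i)) * R n (extF a0 y) b := by
      intro b
      rw [hlast, hRdep n _ _ (hlt y b)]
      congr 1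
      apply Finset.prod_congr rfl
      intro i hi
      have hi := Finset.mem_range.1 hi
      rw [hlt y b i hi, hRdep i _ _ (fun j hj => hlt y b j (hj.trans hi))]
    simp_rw [this]
    rw [ENNReal.tsum_mul_left, hRsum, mul_one]

/-- Example 4.1: in the regime switching model with all within-alphabet
distributions equal to one distribution `P = (p_k)` with counting function `ν`, for
`n ≥ 1`, `0 ≤ r ≤ n−1` and `ε ∈ [0,1]`:
`P{𝓛_n = r} ≤ Σ_{m=r}^n C_{r,m}(ε) P{L_n = m}`, where `C_{r,r} = Σ_k p_k^{1+r}` and,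
for `r+1 ≤ m ≤ n`, `C_{r,m}(ε) = c(r)ν(ε)/m + 2^{1+r} binom(m,r) ∫_0^ε u^r ν(u/2)(1−u/2)^{m−r} du`. -/
theorem regime_switching_same_alphabet_bound {A : Type*} [Countable A] [DecidableEq A]
    {Ω : Type*} [MeasurableSpace Ω] (P : Measure Ω) [IsProbabilityMeasure P]
    (Z : ℕ → Ω → A × ℕ)
    (q : ℕ → ℝ≥0∞) (hq : ∑' k, q k = 1)
    (p : A → ℕ → ℝ≥0∞) (hpq : ∀ a, p a = q)
    (R : ℕ → (ℕ → A) → A → ℝ≥0∞)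
    (hRdep : ∀ (n : ℕ) (a a' : ℕ → A), (∀ i < n, a i = a' i) → R n a = R n a')
    (hRsum : ∀ (n : ℕ) (a : ℕ → A), ∑' b, R n a b = 1)
    (hZ : ∀ (n : ℕ) (a : ℕ → A) (k : ℕ → ℕ),
      P (⋂ i ∈ Finset.range (n + 1), {ω | Z i ω = (a i, k i)}) =
        (∏ i ∈ Finset.range (n + 1), R i a (a i)) *
          ∏ i ∈ Finset.range (n + 1), p (a i) (k i))
    (n r : ℕ) (hn : 1 ≤ n) (hr : r ≤ n - 1) (ε : ℝ) (hε : ε ∈ Set.Icc (0 : ℝ) 1) :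
    P {ω | (∑ i ∈ Finset.range n, if Z i ω = Z n ω then 1 else 0 : ℕ) = r} ≤
      ∑ m ∈ Finset.Icc r n,
        (if m = r then ∑' k, q k ^ (r + 1)
         else cDGP r * nuCount1 q ε / (m : ℝ≥0∞) +
           2 ^ (r + 1) * (m.choose r : ℝ≥0∞) *
             ∫⁻ u in Set.Ioc (0 : ℝ) ε,
               ENNReal.ofReal u ^ r * nuCount1 q (u / 2) *
                 ENNReal.ofReal (1 - u / 2) ^ (m - r)) *
          P {ω | (∑ i ∈ Finset.range n, if (Z i ω).1 = (Z n ω).1 then 1 else 0 : ℕ) = m} := by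
  classical
  have hΩ : Nonempty Ω := P.nonempty_of_neZero
  obtain ⟨ω0⟩ := hΩ
  let a0 : A := (Z 0 ω0).1
  let X := (Fin (n + 1) → A) × (Fin (n + 1) → ℕ)
  let W : (Fin (n + 1) → A) → ℝ≥0∞ := fun a =>
    ∏ i ∈ Finset.range (n + 1), R i (extF a0 a) (extF a0 a i)
  let w : X → ℝ≥0∞ := fun x => W x.1 * ∏ i, q (x.2 i)
  let τ : Ω → X := fun ω => (fun i => (Z i ω).1, fun i => (Z i ω).2)
  have hQ1 : ∑' (k : Fin (n + 1) → ℕ), ∏ i, q (k i) = 1 := by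
    rw [tsum_pi_prod (n + 1) (fun _ => q)]; simp [hq]
  have hW1 : ∑' a, W a = 1 := tsum_R a0 R hRdep hRsum (n + 1)
  have hw : ∀ x, P (τ ⁻¹' {x}) = w x := by
    rintro ⟨a, k⟩
    have h := hZ n (extF a0 a) (extF 0 k)
    have e1 : (⋂ i ∈ Finset.range (n + 1), {ω | Z i ω = (extF a0 a i, extF 0 k i)})
        = τ ⁻¹' {(a, k)} := by
      ext ω
      simp only [Set.mem_iInter, Finset.mem_range, Set.mem_ofPred_eq, Set.mem_preimage,
        Set.mem_singleton_iff, τ, Prod.ext_iff]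
      constructor
      · intro H
        refine Prod.ext (funext fun i => ?_) (funext fun i => ?_)
        · have := (H i i.2).1
          simp only [extF, i.2, dif_pos] at this
          exact this
        · have := (H i i.2).2
          simp only [extF, i.2, dif_pos] at this
          exact this
      · intro H i hi
        have h1 := congrFun (congrArg Prod.fst H) ⟨i, hi⟩
        have h2 := congrFun (congrArg Prod.snd H) ⟨i, hi⟩
        simp only [extF, hi, dif_pos]
        exact ⟨h1, h2⟩
    rw [e1] at h
    rw [h]
    simp only [w, W]
    congr 1
    rw [Finset.prod_range]
    apply Finset.prod_congr rfl
    intro i _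
    rw [hpq]
    simp only [extF, i.2, dif_pos]
  have hw1 : ∑' x, w x = 1 := by
    simp only [w]
    rw [ENNReal.tsum_prod']
    simp only [ENNReal.tsum_mul_left, hQ1, mul_one, hW1]
  let J : (Fin (n + 1) → A) → Finset (Fin n) := fun a =>
    Finset.univ.filter (fun i => a i.castSucc = a (Fin.last n))
  have hL : P {ω | (∑ i ∈ Finset.range n, if Z i ω = Z n ω then 1 else 0 : ℕ) = r} =
      ∑' a, W a * ∑' c, ((J a).card.choose r : ℝ≥0∞) *
        (q c ^ (r + 1) * (1 - q c) ^ ((J a).card - r)) := by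
    have e : {ω | (∑ i ∈ Finset.range n, if Z i ω = Z n ω then 1 else 0 : ℕ) = r} =
        τ ⁻¹' {x | ((J x.1).filter (fun i => x.2 i.castSucc = x.2 (Fin.last n))).card = r} := by
      ext ω
      simp only [Set.mem_ofPred_eq, Set.mem_preimage, J, τ, Finset.filter_filter]
      rw [Finset.sum_range, Finset.card_filter]
      simp [Prod.ext_iff]
    rw [e, meas_eq P τ w hw hw1, ENNReal.tsum_prod']
    congr 1; ext a
    rw [tsum_snoc, ← ENNReal.tsum_mul_left]
    congr 1; ext c
    have := tsum_count q hq c n r (J a)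
    calc _ = ∑' (y : Fin n → ℕ), W a * q c * (if ((J a).filter (fun i => y i = c)).card = r
            then ∏ i, q (y i) else 0) := by
          congr 1; ext y
          simp only [Set.indicator_apply, Set.mem_ofPred_eq, Fin.snoc_castSucc, Fin.snoc_last, w,
            Fin.prod_univ_castSucc]
          split_ifs
          · ring
          · simp
      _ = _ := by
          rw [ENNReal.tsum_mul_left, this]
          ring
  have hR : ∀ m, P {ω | (∑ i ∈ Finset.range n, if (Z i ω).1 = (Z n ω).1 then 1 else 0 : ℕ) = m} =
      ∑' a, if (J a).card = m then W a else 0 := by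
    intro m
    have e : {ω | (∑ i ∈ Finset.range n, if (Z i ω).1 = (Z n ω).1 then 1 else 0 : ℕ) = m} =
        τ ⁻¹' {x | (J x.1).card = m} := by
      ext ω
      simp only [Set.mem_ofPred_eq, Set.mem_preimage, J, τ]
      rw [Finset.sum_range, Finset.card_filter]
      simp
    rw [e, meas_eq P τ w hw hw1, ENNReal.tsum_prod']
    congr 1; ext a
    simp only [Set.indicator_apply, Set.mem_ofPred_eq, w]
    split_ifs
    · rw [ENNReal.tsum_mul_left, hQ1, mul_one]
    · simp
  rw [hL]
  simp_rw [hR, ← ENNReal.tsum_mul_left (α := Fin (n + 1) → A)]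
  rw [← Summable.tsum_finsetSum (fun _ _ => ENNReal.summable)]
  apply ENNReal.tsum_le_tsum
  intro a
  have hJn : (J a).card ≤ n := by simpa using Finset.card_le_univ (J a)
  by_cases hra : r ≤ (J a).card
  · refine le_trans ?_ (Finset.single_le_sum (fun _ _ => zero_le)
      (Finset.mem_Icc.2 ⟨hra, hJn⟩))
    rw [if_pos rfl, ENNReal.tsum_mul_left, mul_comm]
    gcongr
    split_ifs with h
    · rw [h]; simp
    · rw [← ENNReal.tsum_mul_left]
      exact sum_bound q hq _ r (by omega) ε hε.2
  · rw [Nat.choose_eq_zero_of_lt (by omega)]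
    simp
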